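/- Consider REL(Z_n × Z_m, {a,b}) where a = (1,0), b = (0,1), n ≥ m-1 and n, m ≥ 3. If n ≡ 1 (mod m) or n ≡ -1 (mod m), then Player 1 has a winning strategy; if n ≡ 0 (mod m), then Player 2 has a winning strategy. -/

import Mathlib

namespace RelatorGames

variable {G : Type*} [Group G]

/-- The letters available in the relator games: elements of `S` and their inverses. -/
def letters (S : Set G) : Set G := S ∪ (fun g => g⁻¹) '' S

/-- Evaluate a history of moves (most recent letter first) to a group element:
the group element represented by the word built so far. -/
def eval (h : List G) : G := h.reverse.prod

/-- A move `m` is legal after history `h`: it is a letter of `S ∪ S⁻¹` and it is not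
the inverse of the immediately preceding letter (no backtracking). -/
def LegalMove (S : Set G) (h : List G) (m : G) : Prop :=
  m ∈ letters S ∧ ∀ p ∈ h.head?, m ≠ p⁻¹

/-- Appending `m` to the history `h` produces a word equal in `G` to some earlier
prefix of the word (equivalently, the walk in the Cayley graph revisits a vertex). -/
def ClosesCycle (h : List G) (m : G) : Prop :=
  ∃ t, t <:+ h ∧ eval t = eval (m :: h)

/-- A strategy: a choice of next letter given the history (most recent letter first). -/
abbrev Strategy (G : Type*) := List G → G

/-- The sequence of histories arising when the first player (moving at even steps)
uses `σ` and the second player (moving at odd steps) uses `τ`. -/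
def hist (σ τ : Strategy G) : ℕ → List G
  | 0 => []
  | k + 1 =>
      (if k % 2 = 0 then σ (hist σ τ k) else τ (hist σ τ k)) :: hist σ τ k

/-- The move made at step `k` in the play of `σ` against `τ`. -/
def moveAt (σ τ : Strategy G) (k : ℕ) : G :=
  if k % 2 = 0 then σ (hist σ τ k) else τ (hist σ τ k)

/-- Step `j` is uneventful: the move made is legal and does not close a cycle. -/
def Ok (S : Set G) (σ τ : Strategy G) (j : ℕ) : Prop :=
  LegalMove S (hist σ τ j) (moveAt σ τ j) ∧ ¬ ClosesCycle (hist σ τ j) (moveAt σ τ j)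

/-- In the play of `σ` against `τ`, the player moving at steps congruent to `p` mod 2
wins the relator achievement game `REL(G,S)`: at the first eventful step, either it is
that player's turn and they legally close a cycle, or it is the opponent's turn and the
opponent has made an illegal move (in particular, has no legal move). -/
def RelWins (S : Set G) (p : ℕ) (σ τ : Strategy G) : Prop :=
  ∃ k : ℕ, (∀ j < k, Ok S σ τ j) ∧
    ((k % 2 = p ∧ LegalMove S (hist σ τ k) (moveAt σ τ k) ∧
        ClosesCycle (hist σ τ k) (moveAt σ τ k)) ∨
      (k % 2 ≠ p ∧ ¬ LegalMove S (hist σ τ k) (moveAt σ τ k)))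

/-- In the play of `σ` against `τ`, the player moving at steps congruent to `p` mod 2
wins the relator avoidance game `RAV(G,S)`: at the first eventful step it is the
opponent's turn, and the opponent either makes an illegal move (in particular, has no
legal move) or closes a cycle. -/
def RavWins (S : Set G) (p : ℕ) (σ τ : Strategy G) : Prop :=
  ∃ k : ℕ, (∀ j < k, Ok S σ τ j) ∧ k % 2 ≠ p ∧
    (¬ LegalMove S (hist σ τ k) (moveAt σ τ k) ∨ ClosesCycle (hist σ τ k) (moveAt σ τ k))

/-- Player 1 has a winning strategy for `REL(G,S)`. -/
def FirstWinsREL (S : Set G) : Prop :=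
  ∃ σ : Strategy G, ∀ τ : Strategy G, RelWins S 0 σ τ

/-- Player 2 has a winning strategy for `REL(G,S)`. -/
def SecondWinsREL (S : Set G) : Prop :=
  ∃ τ : Strategy G, ∀ σ : Strategy G, RelWins S 1 σ τ

/-- Player 1 has a winning strategy for `RAV(G,S)`. -/
def FirstWinsRAV (S : Set G) : Prop :=
  ∃ σ : Strategy G, ∀ τ : Strategy G, RavWins S 0 σ τ

/-- Player 2 has a winning strategy for `RAV(G,S)`. -/
def SecondWinsRAV (S : Set G) : Prop :=
  ∃ τ : Strategy G, ∀ σ : Strategy G, RavWins S 1 σ τ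

end RelatorGames

namespace RelatorGames

section General
variable {G : Type*} [Group G]

/-- The player to move has a legal move that closes a cycle. -/
def Closable (S : Set G) (h : List G) : Prop := ∃ r, LegalMove S h r ∧ ClosesCycle h r

/-- The player to move can legally restore the invariant. -/
def Restorable (S : Set G) (Inv : List G → Prop) (h : List G) : Prop :=
  ∃ r, LegalMove S h r ∧ Inv (r :: h)

open Classical in
/-- Win if possible, otherwise restore the invariant. -/
noncomputable def strat (S : Set G) (Inv : List G → Prop) : Strategy G := fun h =>
  if H : Closable S h then H.choose
  else if H' : Restorable S Inv h then H'.choose else 1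

theorem strat_spec (S : Set G) (Inv : List G → Prop) (h : List G)
    (H : Closable S h ∨ Restorable S Inv h) :
    LegalMove S h (strat S Inv h) ∧
      (¬ ClosesCycle h (strat S Inv h) → Inv (strat S Inv h :: h)) := by
  unfold strat
  by_cases H1 : Closable S h
  · rw [dif_pos H1]
    exact ⟨H1.choose_spec.1, fun h' => absurd H1.choose_spec.2 h'⟩
  · have H2 : Restorable S Inv h := H.resolve_left H1
    rw [dif_neg H1, dif_pos H2]
    exact ⟨H2.choose_spec.1, fun _ => H2.choose_spec.2⟩

theorem hist_succ (σ τ : Strategy G) (k : ℕ) :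
    hist σ τ (k + 1) = moveAt σ τ k :: hist σ τ k := rfl

theorem hist_suffix (σ τ : Strategy G) (i k : ℕ) : hist σ τ i <:+ hist σ τ (i + k) := by
  induction k with
  | zero => exact List.suffix_refl _
  | succ k ih => exact ih.trans (List.suffix_cons _ _)

theorem exists_not_ok [Finite G] (S : Set G) (σ τ : Strategy G) : ∃ k, ¬ Ok S σ τ k := by
  by_contra! hall
  have hlt : ∀ i j, i < j → eval (hist σ τ i) ≠ eval (hist σ τ j) := by
    intro i j hij he
    obtain ⟨d, rfl⟩ : ∃ d, j = i + d + 1 := ⟨j - i - 1, by omega⟩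
    exact (hall (i + d)).2 ⟨_, hist_suffix σ τ i d, he⟩
  have hinj : Function.Injective (fun k => eval (hist σ τ k)) := by
    intro i j he
    rcases lt_trichotomy i j with h | h | h
    · exact absurd he (hlt _ _ h)
    · exact h
    · exact absurd he.symm (hlt _ _ h)
  exact not_injective_infinite_finite _ hinj

/-- The invariant step condition. -/
def StepCond (S : Set G) (Inv : List G → Prop) : Prop :=
  ∀ h, Inv h → ∀ c, LegalMove S h c →
    ¬ ClosesCycle h c ∧ (Closable S (c :: h) ∨ Restorable S Inv (c :: h))

theorem second_wins [Finite G] (S : Set G) (Inv : List G → Prop) (h0 : Inv [])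
    (hs : StepCond S Inv) : SecondWinsREL S := by
  classical
  refine ⟨strat S Inv, fun σ => ?_⟩
  set τ := strat S Inv with hτ
  have hex := exists_not_ok S σ τ
  have hev : ∀ i, moveAt σ τ (2 * i + 1) = strat S Inv (hist σ τ (2 * i + 1)) := by
    intro i
    have : ¬ ((2 * i + 1) % 2 = 0) := by omega
    simp only [moveAt, if_neg this, hτ]
  have hinv : ∀ i, (∀ j < 2 * i, Ok S σ τ j) → Inv (hist σ τ (2 * i)) := by
    intro i
    induction i with
    | zero => intro _; exact h0
    | succ i ih =>
      intro hok
      have hi := ih (fun j hj => hok j (by omega))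
      have h1 := hok (2 * i) (by omega)
      have h2 := hok (2 * i + 1) (by omega)
      have h3 := strat_spec S Inv (hist σ τ (2 * i + 1)) ((hs _ hi _ h1.1).2)
      have h4 := h2.2
      rw [hev] at h4
      have h5 := h3.2 h4
      rw [← hev] at h5
      exact h5
  refine ⟨Nat.find hex, fun j hj => not_not.1 (Nat.find_min hex hj), ?_⟩
  have hk := Nat.find_spec hex
  have hmin : ∀ j < Nat.find hex, Ok S σ τ j := fun j hj => not_not.1 (Nat.find_min hex hj)
  generalize Nat.find hex = k at hk hmin
  rcases Nat.even_or_odd' k with ⟨i, rfl | rfl⟩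
  · right
    refine ⟨by omega, fun hl => hk ⟨hl, ?_⟩⟩
    exact (hs _ (hinv i hmin) _ hl).1
  · left
    have hi := hinv i (fun j hj => hmin j (by omega))
    have h1 := hmin (2 * i) (by omega)
    have h3 := strat_spec S Inv (hist σ τ (2 * i + 1)) ((hs _ hi _ h1.1).2)
    rw [← hev] at h3
    exact ⟨by omega, h3.1, by_contra fun hc => hk ⟨h3.1, hc⟩⟩

theorem first_wins [Finite G] (S : Set G) (Inv : List G → Prop) (g : G)
    (hg : LegalMove S [] g) (h0 : Inv [g])
    (hs : StepCond S Inv) : FirstWinsREL S := by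
  classical
  refine ⟨fun h => if h = [] then g else strat S Inv h, fun τ => ?_⟩
  set σ : Strategy G := fun h => if h = [] then g else strat S Inv h with hσ
  have hex := exists_not_ok S σ τ
  have hz : moveAt σ τ 0 = g := by simp [moveAt, hist, hσ]
  have hev : ∀ i, moveAt σ τ (2 * i + 2) = strat S Inv (hist σ τ (2 * i + 2)) := by
    intro i
    have : ((2 * i + 2) % 2 = 0) := by omega
    have h2 : hist σ τ (2 * i + 2) ≠ [] := by rw [hist_succ]; simp
    simp only [moveAt, if_pos this]
    rw [hσ]
    exact if_neg h2
  have hinv : ∀ i, (∀ j < 2 * i + 1, Ok S σ τ j) → Inv (hist σ τ (2 * i + 1)) := by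
    intro i
    induction i with
    | zero => intro _; rw [hist_succ, hz]; exact h0
    | succ i ih =>
      intro hok
      have hi := ih (fun j hj => hok j (by omega))
      have h1 := hok (2 * i + 1) (by omega)
      have h2 := hok (2 * i + 2) (by omega)
      have h3 := strat_spec S Inv (hist σ τ (2 * i + 2)) ((hs _ hi _ h1.1).2)
      have h4 := h2.2
      rw [hev] at h4
      have h5 := h3.2 h4
      rw [← hev] at h5
      exact h5
  refine ⟨Nat.find hex, fun j hj => not_not.1 (Nat.find_min hex hj), ?_⟩
  have hk := Nat.find_spec hex
  have hmin : ∀ j < Nat.find hex, Ok S σ τ j := fun j hj => not_not.1 (Nat.find_min hex hj)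
  generalize Nat.find hex = k at hk hmin
  rcases Nat.even_or_odd' k with ⟨i, rfl | rfl⟩
  · left
    rcases i with _ | i
    · have hl : LegalMove S (hist σ τ (2 * 0)) (moveAt σ τ (2 * 0)) := by
        rw [mul_zero, hz]; exact hg
      exact ⟨by omega, hl, by_contra fun hc => hk ⟨hl, hc⟩⟩
    · have hi := hinv i (fun j hj => hmin j (by omega))
      have h1 := hmin (2 * i + 1) (by omega)
      have h3 := strat_spec S Inv (hist σ τ (2 * i + 2)) ((hs _ hi _ h1.1).2)
      rw [← hev] at h3
      exact ⟨by omega, h3.1, by_contra fun hc => hk ⟨h3.1, hc⟩⟩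
  · right
    refine ⟨by omega, fun hl => hk ⟨hl, ?_⟩⟩
    exact (hs _ (hinv i hmin) _ hl).1

end General

/-- Histories made of blocks `xy` or `yx` after a fixed base. -/
inductive Path {G : Type*} (x y : G) (base : List G) (q : Prop) : ℕ → List G → Prop
  | nil : Path x y base q 0 base
  | xy {k h} : Path x y base q k h → Path x y base q (k + 1) (y :: x :: h)
  | yx {k h} : (k = 0 → q) → Path x y base q k h → Path x y base q (k + 1) (x :: y :: h)

section Comm
variable {G : Type*} [CommGroup G]

theorem eval_cons (c : G) (h : List G) : eval (c :: h) = eval h * c := by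
  simp [eval]

/-- Group element with coordinates `i, j`. -/
def E (x y : G) (i j : ℤ) : G := x ^ i * y ^ j

theorem E_mul_x (x y : G) (i j : ℤ) : E x y i j * x = E x y (i + 1) j := by
  unfold E; rw [zpow_add_one, mul_right_comm]

theorem E_mul_y (x y : G) (i j : ℤ) : E x y i j * y = E x y i (j + 1) := by
  unfold E; rw [zpow_add_one, mul_assoc]

theorem E_mul_x' (x y : G) (i j : ℤ) : E x y i j * x⁻¹ = E x y (i - 1) j := by
  unfold E; rw [zpow_sub_one, mul_right_comm]

theorem E_mul_y' (x y : G) (i j : ℤ) : E x y i j * y⁻¹ = E x y i (j - 1) := by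
  unfold E; rw [zpow_sub_one, mul_assoc]

theorem E_eq {x y : G} {n m : ℤ} (sep : ∀ i j : ℤ, x ^ i * y ^ j = 1 ↔ n ∣ i ∧ m ∣ j)
    (i j i' j' : ℤ) : E x y i j = E x y i' j' ↔ n ∣ i - i' ∧ m ∣ j - j' := by
  rw [← sep, E, E, zpow_sub, zpow_sub, ← mul_inv_eq_one, mul_inv]
  constructor <;> intro h <;> rw [← h] <;> ac_rfl

/-- Visited coordinates. -/
def Vis (u v : ℤ) (q : Prop) (k : ℕ) (i j : ℤ) : Prop :=
  (i = 0 ∧ j = 0) ∨ (∃ l : ℕ, l ≤ k ∧ i = u + l ∧ j = v + l) ∨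
  (∃ l : ℕ, l < k ∧ i = u + l + 1 ∧ j = v + l) ∨
  (∃ l : ℕ, l < k ∧ (l = 0 → q) ∧ i = u + l ∧ j = v + l + 1)

theorem Vis.mono {u v : ℤ} {q : Prop} {k : ℕ} {i j : ℤ} (h : Vis u v q k i j) :
    Vis u v q (k + 1) i j := by
  rcases h with h | ⟨l, h, h'⟩ | ⟨l, h, h'⟩ | ⟨l, h, h'⟩
  · exact Or.inl h
  · exact Or.inr (Or.inl ⟨l, by omega, h'⟩)
  · exact Or.inr (Or.inr (Or.inl ⟨l, by omega, h'⟩))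
  · exact Or.inr (Or.inr (Or.inr ⟨l, by omega, h'⟩))

theorem Path.eval_eq {x y : G} {base : List G} {q : Prop} {u v : ℤ}
    (hb : eval base = E x y u v) {k : ℕ} {h : List G} (hp : Path x y base q k h) :
    eval h = E x y (u + k) (v + k) := by
  induction hp with
  | nil => simpa using hb
  | xy _ ih =>
    rw [eval_cons, eval_cons, ih, E_mul_x, E_mul_y]; push_cast; simp only [add_assoc]
  | yx _ _ ih =>
    rw [eval_cons, eval_cons, ih, E_mul_y, E_mul_x]; push_cast; simp only [add_assoc]

theorem Path.base_suffix {x y : G} {base : List G} {q : Prop}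
    {k : ℕ} {h : List G} (hp : Path x y base q k h) : base <:+ h := by
  induction hp with
  | nil => exact List.suffix_refl _
  | xy _ ih => exact (ih.trans (List.suffix_cons _ _)).trans (List.suffix_cons _ _)
  | yx _ _ ih => exact (ih.trans (List.suffix_cons _ _)).trans (List.suffix_cons _ _)

theorem Path.vis {x y : G} {base : List G} {q : Prop} {u v : ℤ}
    (hb : eval base = E x y u v) (hbs : ∀ t, t <:+ base → t = [] ∨ t = base)
    {k : ℕ} {h : List G} (hp : Path x y base q k h) :
    ∀ t, t <:+ h → ∃ i j, Vis u v q k i j ∧ eval t = E x y i j := by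
  induction hp with
  | nil =>
    intro t ht
    rcases hbs t ht with rfl | rfl
    · exact ⟨0, 0, Or.inl ⟨rfl, rfl⟩, by simp [eval, E]⟩
    · exact ⟨u, v, Or.inr (Or.inl ⟨0, le_rfl, by simp, by simp⟩), hb⟩
  | @xy k h hp ih =>
    intro t ht
    rw [List.suffix_cons_iff, List.suffix_cons_iff] at ht
    rcases ht with rfl | rfl | ht
    · exact ⟨_, _, Or.inr (Or.inl ⟨k + 1, le_rfl, rfl, rfl⟩), (Path.xy hp).eval_eq hb⟩
    · exact ⟨_, _, Or.inr (Or.inr (Or.inl ⟨k, by omega, rfl, rfl⟩)), by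
        rw [eval_cons, hp.eval_eq hb, E_mul_x]⟩
    · obtain ⟨i, j, hv, he⟩ := ih t ht
      exact ⟨i, j, hv.mono, he⟩
  | @yx k h hq hp ih =>
    intro t ht
    rw [List.suffix_cons_iff, List.suffix_cons_iff] at ht
    rcases ht with rfl | rfl | ht
    · exact ⟨_, _, Or.inr (Or.inl ⟨k + 1, le_rfl, rfl, rfl⟩), (Path.yx hq hp).eval_eq hb⟩
    · exact ⟨_, _, Or.inr (Or.inr (Or.inr ⟨k, by omega, hq, rfl, rfl⟩)), by
        rw [eval_cons, hp.eval_eq hb, E_mul_y]⟩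
    · obtain ⟨i, j, hv, he⟩ := ih t ht
      exact ⟨i, j, hv.mono, he⟩

/-- The opponent's new positions at level `k` are new. -/
def Fresh (n m u v : ℤ) (q : Prop) (N : ℕ) : Prop :=
  ∀ k < N, ∀ i j, Vis u v q k i j →
    ¬ (n ∣ i - (u + k + 1) ∧ m ∣ j - (v + k)) ∧ ¬ (n ∣ i - (u + k) ∧ m ∣ j - (v + k + 1))

theorem step_core {S : Set G} {n m : ℤ} (hn : 3 ≤ n) (hm : 3 ≤ m) {x y : G}
    (hS : ∀ c, c ∈ letters S ↔ c = x ∨ c = y ∨ c = x⁻¹ ∨ c = y⁻¹)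
    (sep : ∀ i j : ℤ, x ^ i * y ^ j = 1 ↔ n ∣ i ∧ m ∣ j)
    {base : List G} {u v : ℤ} {q : Prop} {N : ℕ}
    (hb : eval base = E x y u v) (hbs : ∀ t, t <:+ base → t = [] ∨ t = base)
    (hN : n ∣ u + N ∧ m ∣ v + N) (hf : Fresh n m u v q N)
    (hq : ¬ q → Closable S (y :: base))
    {k : ℕ} {h : List G} (hk : k < N) (hp : Path x y base q k h) {c : G}
    (hl : LegalMove S h c) (h0 : k = 0 → c = x ∨ c = y) :
    ¬ ClosesCycle h c ∧ (Closable S (c :: h) ∨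
      ∃ r, LegalMove S (c :: h) r ∧ k + 1 < N ∧ Path x y base q (k + 1) (r :: c :: h)) := by
  have hxy : x * y ≠ 1 := by
    intro h
    have := (sep 1 1).1 (by simpa using h)
    have := Int.le_of_dvd (by norm_num) this.1
    omega
  have n1 : ¬ n ∣ 1 := fun h => by have := Int.le_of_dvd (by norm_num) h; omega
  have m1 : ¬ m ∣ 1 := fun h => by have := Int.le_of_dvd (by norm_num) h; omega
  have hyx : y ≠ x⁻¹ := fun h => hxy (by rw [h]; simp)
  have hxy' : x ≠ y⁻¹ := fun h => hxy (by rw [h]; simp)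
  -- reaching the terminal level closes the cycle
  have term : ∀ r c : G, r * c = x * y → LegalMove S (c :: h) r → ¬ k + 1 < N →
      Closable S (c :: h) := by
    intro r c hrc hr hkN
    have hkN : k + 1 = N := by omega
    refine ⟨r, hr, [], List.nil_suffix, ?_⟩
    rw [eval_cons, eval_cons, hp.eval_eq hb, mul_assoc, mul_comm c, hrc, ← mul_assoc, E_mul_x,
      E_mul_y]
    have : eval ([] : List G) = E x y 0 0 := by simp [eval, E]
    rw [this, E_eq sep]
    rw [← hkN] at hN
    push_cast at hN
    constructor
    · rw [zero_sub, dvd_neg, add_assoc]; exact hN.1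
    · rw [zero_sub, dvd_neg, add_assoc]; exact hN.2
  have caseX : c = x → ¬ ClosesCycle h c ∧ (Closable S (c :: h) ∨
      ∃ r, LegalMove S (c :: h) r ∧ k + 1 < N ∧ Path x y base q (k + 1) (r :: c :: h)) := by
    rintro rfl
    have hr : LegalMove S (c :: h) y := ⟨(hS y).2 (by simp), by simpa using hyx⟩
    refine ⟨?_, ?_⟩
    · rintro ⟨t, ht, he⟩
      obtain ⟨i, j, hv, he'⟩ := hp.vis hb hbs t ht
      rw [he', eval_cons, hp.eval_eq hb, E_mul_x, E_eq sep] at he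
      exact (hf k hk i j hv).1 he
    · by_cases hkN : k + 1 < N
      · exact Or.inr ⟨y, hr, hkN, Path.xy hp⟩
      · exact Or.inl (term y c (mul_comm _ _) hr hkN)
  have caseY : c = y → ¬ ClosesCycle h c ∧ (Closable S (c :: h) ∨
      ∃ r, LegalMove S (c :: h) r ∧ k + 1 < N ∧ Path x y base q (k + 1) (r :: c :: h)) := by
    rintro rfl
    have hr : LegalMove S (c :: h) x := ⟨(hS x).2 (by simp), by simpa using hxy'⟩
    refine ⟨?_, ?_⟩
    · rintro ⟨t, ht, he⟩
      obtain ⟨i, j, hv, he'⟩ := hp.vis hb hbs t ht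
      rw [he', eval_cons, hp.eval_eq hb, E_mul_y, E_eq sep] at he
      exact (hf k hk i j hv).2 he
    · by_cases hkN : k + 1 < N
      · by_cases hq' : k = 0 → q
        · exact Or.inr ⟨x, hr, hkN, Path.yx hq' hp⟩
        · rw [Classical.not_imp] at hq'
          left
          obtain ⟨rfl, hnq⟩ := hq'
          cases hp
          exact hq hnq
      · exact Or.inl (term x c rfl hr hkN)
  rcases (hS c).1 hl.1 with rfl | rfl | hc | hc
  · exact caseX rfl
  · exact caseY rfl
  · -- inverse of x
    cases hp with
    | nil => exact (h0 rfl).elim caseX caseY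
    | @xy k h hp =>
      subst hc
      refine ⟨?_, Or.inl ⟨y⁻¹, ⟨(hS _).2 (by simp), ?_⟩, h, ?_, ?_⟩⟩
      · rintro ⟨t, ht, he⟩
        rw [eval_cons, eval_cons, eval_cons, hp.eval_eq hb, E_mul_x, E_mul_y, E_mul_x'] at he
        rw [List.suffix_cons_iff, List.suffix_cons_iff] at ht
        rcases ht with rfl | rfl | ht
        · rw [eval_cons, eval_cons, hp.eval_eq hb, E_mul_x, E_mul_y, E_eq sep] at he
          exact n1 (by simpa using he.1)
        · rw [eval_cons, hp.eval_eq hb, E_mul_x, E_eq sep] at he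
          exact n1 (by simpa using he.1)
        · obtain ⟨i, j, hv, he'⟩ := hp.vis hb hbs t ht
          rw [he', E_eq sep] at he
          refine (hf k (by omega) i j hv).2 (by simpa using he)
      · simpa using hyx
      · exact ((List.suffix_cons _ _).trans (List.suffix_cons _ _)).trans (List.suffix_cons _ _)
      · simp only [eval_cons]
        rw [mul_right_comm (eval h), mul_inv_cancel_right, mul_inv_cancel_right]
    | @yx k h hq' hp =>
      exact absurd hc (hl.2 x (by simp))
  · cases hp with
    | nil => exact (h0 rfl).elim caseX caseY
    | @yx k h hq' hp =>
      subst hc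
      refine ⟨?_, Or.inl ⟨x⁻¹, ⟨(hS _).2 (by simp), ?_⟩, h, ?_, ?_⟩⟩
      · rintro ⟨t, ht, he⟩
        rw [eval_cons, eval_cons, eval_cons, hp.eval_eq hb, E_mul_y, E_mul_x, E_mul_y'] at he
        rw [List.suffix_cons_iff, List.suffix_cons_iff] at ht
        rcases ht with rfl | rfl | ht
        · rw [eval_cons, eval_cons, hp.eval_eq hb, E_mul_y, E_mul_x, E_eq sep] at he
          exact m1 (by simpa using he.2)
        · rw [eval_cons, hp.eval_eq hb, E_mul_y, E_eq sep] at he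
          exact m1 (by simpa using he.2)
        · obtain ⟨i, j, hv, he'⟩ := hp.vis hb hbs t ht
          rw [he', E_eq sep] at he
          refine (hf k (by omega) i j hv).1 (by simpa using he)
      · simpa using hxy'
      · exact ((List.suffix_cons _ _).trans (List.suffix_cons _ _)).trans (List.suffix_cons _ _)
      · simp only [eval_cons]
        rw [mul_right_comm (eval h), mul_inv_cancel_right, mul_inv_cancel_right]
    | @xy k h hp =>
      exact absurd hc (hl.2 y (by simp))

theorem mem_letters_pair {G : Type*} [CommGroup G] (a b c : G) :
    c ∈ letters ({a, b} : Set G) ↔ c = a ∨ c = b ∨ c = a⁻¹ ∨ c = b⁻¹ := by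
  simp [letters, Set.image_pair]
  tauto

/-- Everything needed about the sign choices. -/
theorem stepCond {a b : G} {n m : ℤ} (hn : 3 ≤ n) (hm : 3 ≤ m)
    (sep : ∀ i j : ℤ, a ^ i * b ^ j = 1 ↔ n ∣ i ∧ m ∣ j)
    {base : List G} {u v : ℤ} {q : Prop} {N : ℕ} (V : G → G → Prop)
    (hV : ∀ x y, V x y → (x = a ∨ x = a⁻¹) ∧ (y = b ∨ y = b⁻¹))
    (hV0 : ∀ c, LegalMove {a, b} base c → ∃ x y, V x y ∧ (c = x ∨ c = y))
    (hb : ∀ x y, V x y → eval base = E x y u v) (hbs : ∀ t, t <:+ base → t = [] ∨ t = base)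
    (hN : n ∣ u + N ∧ m ∣ v + N) (hf : Fresh n m u v q N)
    (hq : ∀ x y, V x y → ¬ q → Closable {a, b} (y :: base)) :
    StepCond {a, b} (fun h => ∃ x y k, V x y ∧ k < N ∧ Path x y base q k h) := by
  have key : ∀ x y, V x y → ∀ k h, k < N → Path x y base q k h → ∀ c,
      LegalMove {a, b} h c → (k = 0 → c = x ∨ c = y) →
      ¬ ClosesCycle h c ∧ (Closable {a, b} (c :: h) ∨ Restorable {a, b}
        (fun h => ∃ x y k, V x y ∧ k < N ∧ Path x y base q k h) (c :: h)) := by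
    intro x y hxy k h hk hp c hl h0
    have hS : ∀ c, c ∈ letters ({a, b} : Set G) ↔ c = x ∨ c = y ∨ c = x⁻¹ ∨ c = y⁻¹ := by
      intro c
      rw [mem_letters_pair]
      obtain ⟨rfl | rfl, rfl | rfl⟩ := hV x y hxy
      · exact Iff.rfl
      · rw [inv_inv]
        constructor <;> rintro (h | h | h | h) <;> simp [h]
      · rw [inv_inv]
        constructor <;> rintro (h | h | h | h) <;> simp [h]
      · rw [inv_inv, inv_inv]
        constructor <;> rintro (h | h | h | h) <;> simp [h]
    have sep' : ∀ i j : ℤ, x ^ i * y ^ j = 1 ↔ n ∣ i ∧ m ∣ j := by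
      intro i j
      obtain ⟨rfl | rfl, rfl | rfl⟩ := hV x y hxy
      · exact sep i j
      · rw [inv_zpow', sep, dvd_neg]
      · rw [inv_zpow', sep, dvd_neg]
      · rw [inv_zpow', inv_zpow', sep, dvd_neg, dvd_neg]
    obtain ⟨h1, h2⟩ := step_core hn hm hS sep' (hb x y hxy) hbs hN hf (hq x y hxy) hk hp hl h0
    refine ⟨h1, h2.imp_right ?_⟩
    rintro ⟨r, hr, hk', hp'⟩
    exact ⟨r, hr, x, y, k + 1, hxy, hk', hp'⟩
  rintro h ⟨x, y, k, hxy, hk, hp⟩ c hl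
  rcases Nat.eq_zero_or_pos k with rfl | hkp
  · cases hp
    obtain ⟨x, y, hxy, hc⟩ := hV0 c hl
    exact key x y hxy 0 base hk Path.nil c hl (fun _ => hc)
  · exact key x y hxy k h hk hp c hl (fun h => by omega)

end Comm

theorem small_dvd {n d : ℤ} (h : n ∣ d) (h1 : -n < d) (h2 : d < n) : d = 0 :=
  Int.eq_zero_of_abs_lt_dvd h (abs_lt.2 ⟨h1, h2⟩)

theorem small_dvd' {n d : ℤ} (h : n ∣ d) (h1 : -(2 * n) < d) (h2 : d < 0) : d = -n := by
  have h3 : n ∣ d + n := dvd_add h dvd_rfl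
  have := small_dvd h3 (by omega) (by omega)
  omega

theorem fresh_zero {n m : ℤ} {N : ℕ} (hn : 3 ≤ n) (hm : 3 ≤ m) (hN : (N : ℤ) = n) (hd : m ∣ n) :
    Fresh n m 0 0 True N := by
  intro k hk i j hv
  rcases hv with ⟨rfl, rfl⟩ | ⟨l, hl, rfl, rfl⟩ | ⟨l, hl, rfl, rfl⟩ | ⟨l, hl, -, rfl, rfl⟩
  · refine ⟨fun ⟨h1, h2⟩ => ?_, fun ⟨h1, h2⟩ => ?_⟩
    · have e1 := small_dvd' h1 (by omega) (by omega)
      have := small_dvd (dvd_add h2 hd) (by omega) (by omega)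
      omega
    · have e1 := small_dvd h1 (by omega) (by omega)
      have := small_dvd h2 (by omega) (by omega)
      omega
  · refine ⟨fun ⟨h1, h2⟩ => ?_, fun ⟨h1, h2⟩ => ?_⟩
    · have e1 := small_dvd' h1 (by omega) (by omega)
      have := small_dvd (dvd_add h2 hd) (by omega) (by omega)
      omega
    · have e1 := small_dvd h1 (by omega) (by omega)
      have := small_dvd h2 (by omega) (by omega)
      omega
  · refine ⟨fun ⟨h1, h2⟩ => ?_, fun ⟨h1, h2⟩ => ?_⟩
    · have e1 := small_dvd h1 (by omega) (by omega)
      omega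
    · have e1 := small_dvd h1 (by omega) (by omega)
      have := small_dvd h2 (by omega) (by omega)
      omega
  · refine ⟨fun ⟨h1, h2⟩ => ?_, fun ⟨h1, h2⟩ => ?_⟩
    · have e1 := small_dvd' h1 (by omega) (by omega)
      have := small_dvd (dvd_add h2 hd) (by omega) (by omega)
      omega
    · have e1 := small_dvd h1 (by omega) (by omega)
      omega

theorem fresh_one {n m : ℤ} {N : ℕ} (hn : 3 ≤ n) (hm : 3 ≤ m) (hN : (N : ℤ) = n - 1)
    (hd : m ∣ n - 1) : Fresh n m 1 0 True N := by
  intro k hk i j hv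
  rcases hv with ⟨rfl, rfl⟩ | ⟨l, hl, rfl, rfl⟩ | ⟨l, hl, rfl, rfl⟩ | ⟨l, hl, -, rfl, rfl⟩
  · refine ⟨fun ⟨h1, h2⟩ => ?_, fun ⟨h1, h2⟩ => ?_⟩
    · have e1 := small_dvd' h1 (by omega) (by omega)
      have := small_dvd (dvd_add h2 hd) (by omega) (by omega)
      omega
    · have e1 := small_dvd h1 (by omega) (by omega)
      omega
  · refine ⟨fun ⟨h1, h2⟩ => ?_, fun ⟨h1, h2⟩ => ?_⟩
    · have e1 := small_dvd h1 (by omega) (by omega)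
      omega
    · have e1 := small_dvd h1 (by omega) (by omega)
      have := small_dvd h2 (by omega) (by omega)
      omega
  · refine ⟨fun ⟨h1, h2⟩ => ?_, fun ⟨h1, h2⟩ => ?_⟩
    · have e1 := small_dvd h1 (by omega) (by omega)
      omega
    · have e1 := small_dvd h1 (by omega) (by omega)
      have := small_dvd h2 (by omega) (by omega)
      omega
  · refine ⟨fun ⟨h1, h2⟩ => ?_, fun ⟨h1, h2⟩ => ?_⟩
    · have e1 := small_dvd h1 (by omega) (by omega)
      omega
    · have e1 := small_dvd h1 (by omega) (by omega)
      omega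

theorem fresh_neg {n m : ℤ} {N : ℕ} (hn : 3 ≤ n) (hm : 3 ≤ m) (hN : (N : ℤ) = n)
    (hd : m ∣ n + 1) : Fresh n m 0 1 (m ≠ 3) N := by
  intro k hk i j hv
  rcases hv with ⟨rfl, rfl⟩ | ⟨l, hl, rfl, rfl⟩ | ⟨l, hl, rfl, rfl⟩ | ⟨l, hl, hq, rfl, rfl⟩
  · refine ⟨fun ⟨h1, h2⟩ => ?_, fun ⟨h1, h2⟩ => ?_⟩
    · have e1 := small_dvd' h1 (by omega) (by omega)
      have := small_dvd (dvd_add h2 hd) (by omega) (by omega)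
      omega
    · have e1 := small_dvd h1 (by omega) (by omega)
      have := small_dvd h2 (by omega) (by omega)
      omega
  · refine ⟨fun ⟨h1, h2⟩ => ?_, fun ⟨h1, h2⟩ => ?_⟩
    · have e1 := small_dvd' h1 (by omega) (by omega)
      have := small_dvd (dvd_add h2 hd) (by omega) (by omega)
      omega
    · have e1 := small_dvd h1 (by omega) (by omega)
      have := small_dvd h2 (by omega) (by omega)
      omega
  · refine ⟨fun ⟨h1, h2⟩ => ?_, fun ⟨h1, h2⟩ => ?_⟩
    · have e1 := small_dvd h1 (by omega) (by omega)
      omega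
    · have e1 := small_dvd h1 (by omega) (by omega)
      have := small_dvd h2 (by omega) (by omega)
      omega
  · refine ⟨fun ⟨h1, h2⟩ => ?_, fun ⟨h1, h2⟩ => ?_⟩
    · have e1 := small_dvd' h1 (by omega) (by omega)
      have hm3 : m ≠ 3 := hq (by omega)
      have := small_dvd (dvd_add h2 hd) (by omega) (by omega)
      omega
    · have e1 := small_dvd h1 (by omega) (by omega)
      omega

theorem suffix_single {G : Type*} (g : G) (t : List G) (h : t <:+ [g]) : t = [] ∨ t = [g] := by
  rw [List.suffix_cons_iff, List.suffix_nil] at h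
  tauto

section Main
variable {G : Type*} [CommGroup G] [Finite G] {a b : G} {n m : ℤ}

theorem main_zero (hn : 3 ≤ n) (hm : 3 ≤ m)
    (sep : ∀ i j : ℤ, a ^ i * b ^ j = 1 ↔ n ∣ i ∧ m ∣ j) (hd : m ∣ n) :
    SecondWinsREL ({a, b} : Set G) := by
  have hN : (n.toNat : ℤ) = n := by omega
  refine second_wins _ _ ?_ (stepCond hn hm sep (base := []) (u := 0) (v := 0) (q := True)
    (N := n.toNat) (fun x y => (x = a ∨ x = a⁻¹) ∧ (y = b ∨ y = b⁻¹)) (fun _ _ h => h)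
    ?_ ?_ ?_ ?_ (fresh_zero hn hm hN hd) (fun _ _ _ h => absurd trivial h))
  · exact ⟨a, b, 0, ⟨Or.inl rfl, Or.inl rfl⟩, by omega, Path.nil⟩
  · intro c hc
    rcases (mem_letters_pair a b c).1 hc.1 with rfl | rfl | rfl | rfl
    · exact ⟨c, b, by simp, by simp⟩
    · exact ⟨a, c, by simp, by simp⟩
    · exact ⟨a⁻¹, b, by simp, by simp⟩
    · exact ⟨a, b⁻¹, by simp, by simp⟩
  · intro x y _; simp [eval, E]
  · intro t ht; left; simpa using ht
  · rw [hN]; simpa using hd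

theorem main_one (hn : 3 ≤ n) (hm : 3 ≤ m)
    (sep : ∀ i j : ℤ, a ^ i * b ^ j = 1 ↔ n ∣ i ∧ m ∣ j) (hd : m ∣ n - 1) :
    FirstWinsREL ({a, b} : Set G) := by
  have hN : ((n - 1).toNat : ℤ) = n - 1 := by omega
  refine first_wins _ _ a ⟨(mem_letters_pair a b a).2 (by simp), by simp⟩ ?_
    (stepCond hn hm sep (base := [a]) (u := 1) (v := 0) (q := True)
    (N := (n - 1).toNat) (fun x y => x = a ∧ (y = b ∨ y = b⁻¹))
    (fun _ _ h => ⟨Or.inl h.1, h.2⟩)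
    ?_ ?_ (suffix_single a) ?_ (fresh_one hn hm hN hd) (fun _ _ _ h => absurd trivial h))
  · exact ⟨a, b, 0, ⟨rfl, Or.inl rfl⟩, by omega, Path.nil⟩
  · intro c hc
    rcases (mem_letters_pair a b c).1 hc.1 with h | rfl | h | rfl
    · exact ⟨a, b, by simp, by simp [h]⟩
    · exact ⟨a, c, by simp, by simp⟩
    · exact absurd h (hc.2 a (by simp))
    · exact ⟨a, b⁻¹, by simp, by simp⟩
  · rintro x y ⟨rfl, _⟩; simp [eval, E]
  · rw [hN]; simpa using hd

theorem main_neg (hn : 3 ≤ n) (hm : 3 ≤ m)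
    (sep : ∀ i j : ℤ, a ^ i * b ^ j = 1 ↔ n ∣ i ∧ m ∣ j) (hd : m ∣ n + 1) :
    FirstWinsREL ({a, b} : Set G) := by
  have hN : (n.toNat : ℤ) = n := by omega
  refine first_wins _ _ b ⟨(mem_letters_pair a b b).2 (by simp), by simp⟩ ?_
    (stepCond hn hm sep (base := [b]) (u := 0) (v := 1) (q := m ≠ 3)
    (N := n.toNat) (fun x y => (x = a ∨ x = a⁻¹) ∧ y = b)
    (fun _ _ h => ⟨h.1, Or.inl h.2⟩)
    ?_ ?_ (suffix_single b) ?_ (fresh_neg hn hm hN hd) ?_)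
  · exact ⟨a, b, 0, ⟨Or.inl rfl, rfl⟩, by omega, Path.nil⟩
  · intro c hc
    rcases (mem_letters_pair a b c).1 hc.1 with rfl | h | rfl | h
    · exact ⟨c, b, by simp, by simp⟩
    · exact ⟨a, b, by simp, by simp [h]⟩
    · exact ⟨a⁻¹, b, by simp, by simp⟩
    · exact absurd h (hc.2 b (by simp))
  · rintro x y ⟨_, rfl⟩; simp [eval, E]
  · rw [hN]
    exact ⟨by simp, by rw [add_comm]; exact hd⟩
  · rintro x y ⟨_, rfl⟩ hq
    have hm3 : m = 3 := not_not.1 hq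
    subst hm3
    refine ⟨y, ⟨(mem_letters_pair a y y).2 (by simp), ?_⟩, [], List.nil_suffix, ?_⟩
    · intro p hp
      have hp : y = p := by simpa using hp
      subst hp
      intro h
      have h2 : y * y = 1 := by
        nth_rewrite 1 [h]; simp
      have := ((sep 0 2).1 (by rw [zpow_zero, one_mul, zpow_two]; exact h2)).2
      omega
    · have h3 : y ^ (3 : ℤ) = 1 := by simpa using (sep 0 3).2 ⟨by simp, by simp⟩
      have h4 : y ^ (3 : ℕ) = 1 := by exact_mod_cast h3
      simp only [eval_cons]
      simp only [eval, List.reverse_nil, List.prod_nil, one_mul]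
      rw [← h4, pow_succ, pow_two]

end Main

theorem sep_zmod (n m : ℕ) (i j : ℤ) :
    (Multiplicative.ofAdd ((1, 0) : ZMod n × ZMod m)) ^ i *
      (Multiplicative.ofAdd ((0, 1) : ZMod n × ZMod m)) ^ j = 1 ↔ (n : ℤ) ∣ i ∧ (m : ℤ) ∣ j := by
  rw [← ofAdd_zsmul, ← ofAdd_zsmul, ← ofAdd_add, ofAdd_eq_one]
  simp [Prod.ext_iff, ZMod.intCast_zmod_eq_zero_iff_dvd]

end RelatorGames


open RelatorGames in
/-- In `REL(ℤ_n × ℤ_m, {a,b})` with `a = (1,0)`, `b = (0,1)`,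
`n ≥ m - 1` and `n, m ≥ 3`: Player 1 wins if `n ≡ ±1 (mod m)`, and Player 2 wins
if `n ≡ 0 (mod m)`. -/
theorem rel_product_cyclic (n m : ℕ) (hm : 3 ≤ m) (hn : 3 ≤ n) (hnm : m - 1 ≤ n) :
    ((n % m = 1 ∨ n % m = m - 1) →
      FirstWinsREL
        ({Multiplicative.ofAdd ((1, 0) : ZMod n × ZMod m),
            Multiplicative.ofAdd ((0, 1) : ZMod n × ZMod m)} :
          Set (Multiplicative (ZMod n × ZMod m)))) ∧
    (n % m = 0 →
      SecondWinsREL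
        ({Multiplicative.ofAdd ((1, 0) : ZMod n × ZMod m),
            Multiplicative.ofAdd ((0, 1) : ZMod n × ZMod m)} :
          Set (Multiplicative (ZMod n × ZMod m)))) := by
  haveI : NeZero n := ⟨by omega⟩
  haveI : NeZero m := ⟨by omega⟩
  haveI : Finite (Multiplicative (ZMod n × ZMod m)) :=
    inferInstanceAs (Finite (ZMod n × ZMod m))
  have hn' : (3 : ℤ) ≤ n := by exact_mod_cast hn
  have hm' : (3 : ℤ) ≤ m := by exact_mod_cast hm
  have hdm := Nat.div_add_mod n m
  have hdm' : (m : ℤ) * (n / m : ℕ) + (n % m : ℕ) = n := by exact_mod_cast hdm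
  refine ⟨?_, fun h => ?_⟩
  · rintro (h | h)
    · refine main_one hn' hm' (sep_zmod n m) ⟨(n / m : ℕ), ?_⟩
      rw [h] at hdm'
      push_cast at hdm' ⊢
      linarith
    · refine main_neg hn' hm' (sep_zmod n m) ⟨(n / m : ℕ) + 1, ?_⟩
      rw [h, Nat.cast_sub (by omega)] at hdm'
      push_cast at hdm' ⊢
      linarith
  · exact main_zero hn' hm' (sep_zmod n m) (by exact_mod_cast Nat.dvd_of_mod_eq_zero h)
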